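/- Let v ∈ ℝ, σ₁ > 0, σ₂ > 0 and σ₁₂ ∈ ℝ with |σ₁₂| < σ₁·σ₂, and set ρ = σ₁₂/(σ₁·σ₂). The function s ↦ p₁₂(v/s, v/σ₂, σ₁₂/(s·σ₂)) (the orthant probability as a function of the first standard deviation, with the covariance σ₁₂ held fixed) is differentiable at s = σ₁ and its derivative there equals (1/σ₁)·g(v/σ₁, v/σ₂, ρ). -/

import Mathlib

open MeasureTheory

/-- The Gaussian tail function `Q(a) = ∫_a^∞ φ(t) dt`, where `φ` is the standard
normal density. -/
noncomputable def Qtail (a : ℝ) : ℝ :=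
  ∫ t in Set.Ioi a, (1 / Real.sqrt (2 * Real.pi)) * Real.exp (-t ^ 2 / 2)

/-- The standardized bivariate Gaussian density `f(y₁,y₂|ρ)` with correlation
coefficient `ρ`. -/
noncomputable def biGauss (y₁ y₂ ρ : ℝ) : ℝ :=
  (1 / (2 * Real.pi * Real.sqrt (1 - ρ ^ 2))) *
    Real.exp (-(y₁ ^ 2 - 2 * ρ * y₁ * y₂ + y₂ ^ 2) / (2 * (1 - ρ ^ 2)))

/-- The orthant probability `p₁₂(a,b,ρ) = ∫_a^∞ ∫_b^∞ f(y₁,y₂|ρ) dy₂ dy₁`. -/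
noncomputable def orthantProb (a b ρ : ℝ) : ℝ :=
  ∫ y₁ in Set.Ioi a, ∫ y₂ in Set.Ioi b, biGauss y₁ y₂ ρ

/-- The function `g(κ₁,κ₂,ϱ)` from the paper. -/
noncomputable def gFun (κ₁ κ₂ ϱ : ℝ) : ℝ :=
  (κ₁ / Real.sqrt (2 * Real.pi)) * Real.exp (-κ₁ ^ 2 / 2) *
      Qtail ((κ₂ - ϱ * κ₁) / Real.sqrt (1 - ϱ ^ 2))
    - ϱ * biGauss κ₁ κ₂ ϱ

/-!
Integrating out the second coordinate gives `p₁₂(a, b, ρ) = ∫_a^∞ φ(x) Q((b - ρx)/√(1 - ρ²)) dx`.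
Hence `∂p₁₂/∂a = -φ(a) Q((b - ρa)/√(1 - ρ²))`, while differentiating under the integral in `ρ`
produces `-∂f/∂x (x, b | ρ)`, so that `∂p₁₂/∂ρ = f(a, b | ρ)` (Plackett's identity). Both partial
derivatives are continuous, so the chain rule applies along the curve `s ↦ (v/s, c/s)`.
-/

open Filter ProbabilityTheory Set
open scoped Topology NNReal

local notation "φ" => gaussianPDFReal 0 1

section IntegralIoi

variable {E : Type*} [NormedAddCommGroup E] [NormedSpace ℝ E]

lemma hasDerivAt_integral_Ioi [CompleteSpace E] {f : ℝ → E} {a c : ℝ} (hca : c < a)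
    (hf : IntegrableOn f (Ioi c)) (hfa : ContinuousAt f a) :
    HasDerivAt (fun x => ∫ t in Ioi x, f t) (-f a) a := by
  have hint : IntervalIntegrable f volume c a :=
    (intervalIntegrable_iff_integrableOn_Ioc_of_le hca.le).2 (hf.mono_set Ioc_subset_Ioi_self)
  have hFTC : HasDerivAt (fun x => ∫ t in c..x, f t) (f a) a :=
    intervalIntegral.integral_hasDerivAt_right hint
      ⟨Ioi c, Ioi_mem_nhds hca, hf.aestronglyMeasurable⟩ hfa
  refine (hFTC.const_sub (∫ t in Ioi c, f t)).congr_of_eventuallyEq ?_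
  filter_upwards [Ioi_mem_nhds hca] with x hx
  rw [← intervalIntegral.integral_interval_add_Ioi hf (hf.mono_set (Ioi_subset_Ioi hx.le)),
    add_sub_cancel_left]

lemma integral_Ioi_comp_sub_div (g : ℝ → E) (b m : ℝ) {r : ℝ} (hr : 0 < r) :
    ∫ y in Ioi b, g ((y - m) / r) = r • ∫ u in Ioi ((b - m) / r), g u := by
  have hind : (Ioi b).indicator (fun y => g ((y - m) / r)) =
      fun y => (Ioi ((b - m) / r)).indicator g ((y - m) / r) := by
    ext y
    simp only [indicator, mem_Ioi, div_lt_div_iff_of_pos_right hr, sub_lt_sub_iff_right]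
  rw [← integral_indicator measurableSet_Ioi, hind,
    integral_sub_right_eq_self (fun y => (Ioi ((b - m) / r)).indicator g (y / r)) m,
    Measure.integral_comp_div, abs_of_pos hr, integral_indicator measurableSet_Ioi]

end IntegralIoi

section Gaussian

lemma continuous_gaussianPDFReal (μ : ℝ) (v : ℝ≥0) : Continuous (gaussianPDFReal μ v) := by
  rw [gaussianPDFReal_def]
  fun_prop

lemma gaussianPDFReal_le (μ : ℝ) (v : ℝ≥0) (x : ℝ) :
    gaussianPDFReal μ v x ≤ (Real.sqrt (2 * Real.pi * v))⁻¹ := by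
  have hexp : Real.exp (-(x - μ) ^ 2 / (2 * v)) ≤ 1 :=
    Real.exp_le_one_iff.2 (div_nonpos_of_nonpos_of_nonneg (by nlinarith) (by positivity))
  exact mul_le_of_le_one_right (by positivity) hexp

lemma gaussianPDFReal_zero_one (x : ℝ) :
    φ x = 1 / Real.sqrt (2 * Real.pi) * Real.exp (-x ^ 2 / 2) := by
  simp [gaussianPDFReal]

lemma integrable_id_mul_gaussianPDFReal : Integrable fun x => x * φ x := by
  refine ((integrable_mul_exp_neg_mul_sq (b := 1 / 2) (by norm_num)).const_mul
    (1 / Real.sqrt (2 * Real.pi))).congr (.of_forall fun x => ?_)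
  simp only [gaussianPDFReal_zero_one]
  ring_nf

lemma Qtail_eq_integral (a : ℝ) : Qtail a = ∫ t in Ioi a, φ t := by
  simp only [Qtail, gaussianPDFReal_zero_one]

lemma hasDerivAt_Qtail (a : ℝ) : HasDerivAt Qtail (-φ a) a := by
  rw [funext Qtail_eq_integral]
  exact hasDerivAt_integral_Ioi (sub_one_lt a) (integrable_gaussianPDFReal 0 1).integrableOn
    (continuous_gaussianPDFReal 0 1).continuousAt

lemma continuous_Qtail : Continuous Qtail :=
  continuous_iff_continuousAt.2 fun a => (hasDerivAt_Qtail a).continuousAt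

lemma Qtail_nonneg (a : ℝ) : 0 ≤ Qtail a := by
  rw [Qtail_eq_integral]
  exact integral_nonneg (gaussianPDFReal_nonneg 0 1)

lemma Qtail_le_one (a : ℝ) : Qtail a ≤ 1 := by
  rw [Qtail_eq_integral, ← integral_gaussianPDFReal_eq_one 0 one_ne_zero]
  exact setIntegral_le_integral (integrable_gaussianPDFReal 0 1)
    (.of_forall (gaussianPDFReal_nonneg 0 1))

end Gaussian

section BivariateDensity

variable {ρ : ℝ}

lemma one_sub_sq_pos_of_abs_lt_one (hρ : |ρ| < 1) : 0 < 1 - ρ ^ 2 :=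
  sub_pos.2 ((sq_lt_one_iff_abs_lt_one ρ).2 hρ)

lemma biGauss_comm (x y ρ : ℝ) : biGauss x y ρ = biGauss y x ρ := by
  unfold biGauss
  ring_nf

lemma biGauss_nonneg (x y ρ : ℝ) : 0 ≤ biGauss x y ρ := by
  unfold biGauss
  positivity

lemma biGauss_eq_mul (hρ : |ρ| < 1) (x y : ℝ) :
    biGauss x y ρ =
      φ x * (φ ((y - ρ * x) / Real.sqrt (1 - ρ ^ 2)) / Real.sqrt (1 - ρ ^ 2)) := by
  have hpos := one_sub_sq_pos_of_abs_lt_one hρ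
  have hexponent : -(x ^ 2 - 2 * ρ * x * y + y ^ 2) / (2 * (1 - ρ ^ 2)) =
      -x ^ 2 / 2 + -((y - ρ * x) / Real.sqrt (1 - ρ ^ 2)) ^ 2 / 2 := by
    rw [div_pow, Real.sq_sqrt hpos.le]
    field_simp
    ring
  simp only [biGauss, gaussianPDFReal_zero_one]
  rw [hexponent, Real.exp_add]
  field_simp
  rw [Real.sq_sqrt (by positivity)]

lemma biGauss_le {t : ℝ} (ht : t < 1) (hρ : |ρ| ≤ t) (x y : ℝ) :
    biGauss x y ρ ≤ φ x * ((Real.sqrt (2 * Real.pi))⁻¹ / Real.sqrt (1 - t ^ 2)) := by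
  have ht' : 0 < 1 - t ^ 2 :=
    one_sub_sq_pos_of_abs_lt_one (by rwa [abs_of_nonneg ((abs_nonneg ρ).trans hρ)])
  have hsq : 1 - t ^ 2 ≤ 1 - ρ ^ 2 :=
    sub_le_sub_left (sq_le_sq.2 (hρ.trans (le_abs_self t))) 1
  rw [biGauss_eq_mul (hρ.trans_lt ht)]
  have hφ := gaussianPDFReal_nonneg 0 1 x
  gcongr
  simpa using gaussianPDFReal_le 0 1 ((y - ρ * x) / Real.sqrt (1 - ρ ^ 2))

lemma continuousAt_biGauss (hρ : |ρ| < 1) (x y : ℝ) :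
    ContinuousAt (fun p : ℝ × ℝ => biGauss p.1 y p.2) (x, ρ) := by
  have hpos := one_sub_sq_pos_of_abs_lt_one hρ
  unfold biGauss
  fun_prop (disch := positivity)

lemma hasDerivAt_biGauss_left (x y ρ : ℝ) :
    HasDerivAt (fun x => biGauss x y ρ) (-((x - ρ * y) / (1 - ρ ^ 2) * biGauss x y ρ)) x := by
  have hquad : HasDerivAt (fun x => x ^ 2 - 2 * ρ * x * y + y ^ 2) (2 * (x - ρ * y)) x := by
    convert! ((hasDerivAt_pow 2 x).sub
      (((hasDerivAt_id x).const_mul (2 * ρ)).mul_const y)).add_const (y ^ 2) using 1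
    simp only [Nat.cast_ofNat, Nat.add_one_sub_one, pow_one]
    ring
  convert! ((hquad.fun_neg.div_const (2 * (1 - ρ ^ 2))).exp).const_mul
    (1 / (2 * Real.pi * Real.sqrt (1 - ρ ^ 2))) using 1
  rw [neg_div _ (2 * (x - ρ * y)), mul_div_mul_left _ _ two_ne_zero, biGauss]
  ring

lemma integrable_biGauss_left (hρ : |ρ| < 1) (y : ℝ) : Integrable fun x => biGauss x y ρ := by
  have hr := Real.sqrt_pos.2 (one_sub_sq_pos_of_abs_lt_one hρ)
  simp only [biGauss_comm _ y, biGauss_eq_mul hρ]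
  exact ((((integrable_gaussianPDFReal 0 1).comp_div hr.ne').comp_sub_right (ρ * y)).div_const
    _).const_mul _

lemma integrable_sub_mul_biGauss_left (hρ : |ρ| < 1) (y : ℝ) :
    Integrable fun x => (x - ρ * y) / (1 - ρ ^ 2) * biGauss x y ρ := by
  have hpos := one_sub_sq_pos_of_abs_lt_one hρ
  have hr := Real.sqrt_pos.2 hpos
  refine (((integrable_id_mul_gaussianPDFReal.comp_div hr.ne').comp_sub_right
    (ρ * y)).const_mul (φ y / (1 - ρ ^ 2))).congr (.of_forall fun x => ?_)
  simp only [biGauss_comm x y, biGauss_eq_mul hρ]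
  ring

lemma integral_Ioi_sub_mul_biGauss_left (hρ : |ρ| < 1) (a y : ℝ) :
    ∫ x in Ioi a, (x - ρ * y) / (1 - ρ ^ 2) * biGauss x y ρ = biGauss a y ρ := by
  have hint := (integrable_sub_mul_biGauss_left hρ y).neg.integrableOn (s := Ioi a)
  have hderiv := fun x (_ : x ∈ Ici a) => hasDerivAt_biGauss_left x y ρ
  have hlim : Tendsto (fun x => biGauss x y ρ) atTop (𝓝 0) :=
    tendsto_zero_of_hasDerivAt_of_integrableOn_Ioi
      (fun x hx => hderiv x (Ioi_subset_Ici_self hx)) hint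
      (integrable_biGauss_left hρ y).integrableOn
  have hFTC := integral_Ioi_of_hasDerivAt_of_tendsto' hderiv hint hlim
  rwa [integral_neg, zero_sub, neg_inj] at hFTC

lemma integral_Ioi_biGauss_right (hρ : |ρ| < 1) (x b : ℝ) :
    ∫ y in Ioi b, biGauss x y ρ = φ x * Qtail ((b - ρ * x) / Real.sqrt (1 - ρ ^ 2)) := by
  have hr := Real.sqrt_pos.2 (one_sub_sq_pos_of_abs_lt_one hρ)
  simp only [biGauss_eq_mul hρ]
  rw [integral_const_mul, integral_div, integral_Ioi_comp_sub_div _ _ _ hr, smul_eq_mul,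
    mul_div_cancel_left₀ _ hr.ne', Qtail_eq_integral]

end BivariateDensity

section OrthantProbability

variable {ρ : ℝ}

lemma orthantProb_eq_integral (hρ : |ρ| < 1) (a b : ℝ) :
    orthantProb a b ρ =
      ∫ x in Ioi a, φ x * Qtail ((b - ρ * x) / Real.sqrt (1 - ρ ^ 2)) := by
  simp only [orthantProb, integral_Ioi_biGauss_right hρ]

lemma continuous_gaussianPDFReal_mul_Qtail (b ρ : ℝ) :
    Continuous fun x => φ x * Qtail ((b - ρ * x) / Real.sqrt (1 - ρ ^ 2)) := by
  have hφ := continuous_gaussianPDFReal 0 1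
  have hQ := continuous_Qtail
  fun_prop

lemma integrable_gaussianPDFReal_mul_Qtail (b ρ : ℝ) :
    Integrable fun x => φ x * Qtail ((b - ρ * x) / Real.sqrt (1 - ρ ^ 2)) := by
  refine (integrable_gaussianPDFReal 0 1).mono'
    (continuous_gaussianPDFReal_mul_Qtail b ρ).aestronglyMeasurable (.of_forall fun x => ?_)
  have hφ := gaussianPDFReal_nonneg 0 1 x
  rw [Real.norm_of_nonneg (mul_nonneg hφ (Qtail_nonneg _))]
  exact mul_le_of_le_one_right hφ (Qtail_le_one _)

lemma hasDerivAt_orthantProb_left (hρ : |ρ| < 1) (a b : ℝ) :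
    HasDerivAt (fun a => orthantProb a b ρ)
      (-(φ a * Qtail ((b - ρ * a) / Real.sqrt (1 - ρ ^ 2)))) a := by
  simp only [orthantProb_eq_integral hρ]
  exact hasDerivAt_integral_Ioi (sub_one_lt a)
    (integrable_gaussianPDFReal_mul_Qtail b ρ).integrableOn
    (continuous_gaussianPDFReal_mul_Qtail b ρ).continuousAt

lemma hasDerivAt_gaussianPDFReal_mul_Qtail (hρ : |ρ| < 1) (x b : ℝ) :
    HasDerivAt (fun ρ => φ x * Qtail ((b - ρ * x) / Real.sqrt (1 - ρ ^ 2)))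
      ((x - ρ * b) / (1 - ρ ^ 2) * biGauss x b ρ) ρ := by
  have hpos := one_sub_sq_pos_of_abs_lt_one hρ
  have hr := Real.sqrt_pos.2 hpos
  have hnum : HasDerivAt (fun ρ => b - ρ * x) (-x) ρ := by
    simpa using ((hasDerivAt_id ρ).mul_const x).const_sub b
  have hden : HasDerivAt (fun ρ => Real.sqrt (1 - ρ ^ 2)) (-ρ / Real.sqrt (1 - ρ ^ 2)) ρ := by
    convert! ((hasDerivAt_pow 2 ρ).const_sub 1).sqrt hpos.ne' using 1
    field_simp
    simp only [Nat.cast_ofNat, Nat.add_one_sub_one, pow_one]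
    ring
  convert! ((hasDerivAt_Qtail _).comp ρ (hnum.fun_div hden hr.ne')).const_mul (φ x) using 1
  rw [biGauss_eq_mul hρ]
  field_simp
  rw [Real.sq_sqrt hpos.le]
  ring

lemma norm_sub_mul_biGauss_le {t : ℝ} (ht : t < 1) (hρ : |ρ| ≤ t) (x b : ℝ) :
    ‖(x - ρ * b) / (1 - ρ ^ 2) * biGauss x b ρ‖ ≤
      (‖x * φ x‖ + |b| * φ x) *
        ((Real.sqrt (2 * Real.pi))⁻¹ / Real.sqrt (1 - t ^ 2) / (1 - t ^ 2)) := by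
  have ht₀ : 0 ≤ t := (abs_nonneg ρ).trans hρ
  have ht' : 0 < 1 - t ^ 2 := one_sub_sq_pos_of_abs_lt_one (by rwa [abs_of_nonneg ht₀])
  have hsq : 1 - t ^ 2 ≤ 1 - ρ ^ 2 :=
    sub_le_sub_left (sq_le_sq.2 (hρ.trans (le_abs_self t))) 1
  have hφ := gaussianPDFReal_nonneg 0 1 x
  have hnum : |x - ρ * b| ≤ |x| + |b| := by
    calc |x - ρ * b| ≤ |x| + |ρ * b| := abs_sub _ _
      _ ≤ |x| + |b| := by
        rw [abs_mul]
        gcongr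
        exact mul_le_of_le_one_left (abs_nonneg b) (hρ.trans ht.le)
  rw [norm_mul, norm_div, Real.norm_of_nonneg (biGauss_nonneg x b ρ),
    Real.norm_of_nonneg (ht'.le.trans hsq), Real.norm_eq_abs]
  calc |x - ρ * b| / (1 - ρ ^ 2) * biGauss x b ρ
      ≤ (|x| + |b|) / (1 - t ^ 2) *
          (φ x * ((Real.sqrt (2 * Real.pi))⁻¹ / Real.sqrt (1 - t ^ 2))) := by
        have hf := biGauss_nonneg x b ρ
        gcongr
        exact biGauss_le ht hρ x b
    _ = _ := by
        rw [norm_mul, Real.norm_of_nonneg hφ, Real.norm_eq_abs]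
        ring

lemma hasDerivAt_orthantProb_corr (hρ : |ρ| < 1) (a b : ℝ) :
    HasDerivAt (fun ρ => orthantProb a b ρ) (biGauss a b ρ) ρ := by
  obtain ⟨t, hρt, ht⟩ := exists_between hρ
  have hnhds : {ρ' : ℝ | |ρ'| < t} ∈ 𝓝 ρ :=
    (isOpen_lt continuous_abs continuous_const).mem_nhds hρt
  have hbound : Integrable fun x => (‖x * φ x‖ + |b| * φ x) *
      ((Real.sqrt (2 * Real.pi))⁻¹ / Real.sqrt (1 - t ^ 2) / (1 - t ^ 2)) :=
    (integrable_id_mul_gaussianPDFReal.norm.add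
      ((integrable_gaussianPDFReal 0 1).const_mul |b|)).mul_const _
  have hderiv := (hasDerivAt_integral_of_dominated_loc_of_deriv_le (μ := volume.restrict (Ioi a))
    (F := fun ρ x => φ x * Qtail ((b - ρ * x) / Real.sqrt (1 - ρ ^ 2)))
    (F' := fun ρ x => (x - ρ * b) / (1 - ρ ^ 2) * biGauss x b ρ) hnhds
    (.of_forall fun ρ' => (continuous_gaussianPDFReal_mul_Qtail b ρ').aestronglyMeasurable)
    (integrable_gaussianPDFReal_mul_Qtail b ρ).integrableOn
    (integrable_sub_mul_biGauss_left hρ b).integrableOn.aestronglyMeasurable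
    (.of_forall fun x ρ' hρ' => norm_sub_mul_biGauss_le ht hρ'.le x b)
    hbound.integrableOn
    (.of_forall fun x ρ' hρ' => hasDerivAt_gaussianPDFReal_mul_Qtail (hρ'.trans ht) x b)).2
  rw [integral_Ioi_sub_mul_biGauss_left hρ] at hderiv
  refine hderiv.congr_of_eventuallyEq ?_
  filter_upwards [hnhds] with ρ' hρ'
  exact orthantProb_eq_integral (hρ'.trans ht) a b

lemma hasStrictFDerivAt_orthantProb (hρ : |ρ| < 1) (a b : ℝ) :
    HasStrictFDerivAt (fun p : ℝ × ℝ => orthantProb p.1 b p.2)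
      ((ContinuousLinearMap.toSpanSingleton ℝ
          (-(φ a * Qtail ((b - ρ * a) / Real.sqrt (1 - ρ ^ 2))))).coprod
        (ContinuousLinearMap.toSpanSingleton ℝ (biGauss a b ρ))) (a, ρ) := by
  have hnear : ∀ᶠ p : ℝ × ℝ in 𝓝 (a, ρ), |p.2| < 1 :=
    (isOpen_lt (by fun_prop) continuous_const).mem_nhds hρ
  have hr := Real.sqrt_pos.2 (one_sub_sq_pos_of_abs_lt_one hρ)
  have hcont : ContinuousAt (fun p : ℝ × ℝ =>
      -(φ p.1 * Qtail ((b - p.2 * p.1) / Real.sqrt (1 - p.2 ^ 2)))) (a, ρ) := by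
    have hφ := continuous_gaussianPDFReal 0 1
    have hQ := continuous_Qtail
    fun_prop (disch := positivity)
  have hspan := (ContinuousLinearMap.toSpanSingletonCLE (𝕜 := ℝ) (E := ℝ)).continuous
  refine hasStrictFDerivAt_uncurry_coprod (u := (a, ρ)) (f := fun a ρ => orthantProb a b ρ)
    (f₁ := fun a ρ => ContinuousLinearMap.toSpanSingleton ℝ
      (-(φ a * Qtail ((b - ρ * a) / Real.sqrt (1 - ρ ^ 2)))))
    (f₂ := fun a ρ => ContinuousLinearMap.toSpanSingleton ℝ (biGauss a b ρ)) ?_ ?_ ?_ ?_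
  · filter_upwards [hnear] with p hp
    exact (hasDerivAt_orthantProb_left hp p.1 b).hasFDerivAt
  · filter_upwards [hnear] with p hp
    exact (hasDerivAt_orthantProb_corr hp p.1 b).hasFDerivAt
  · exact hspan.continuousAt.comp hcont
  · exact hspan.continuousAt.comp (continuousAt_biGauss hρ a b)

lemma hasDerivAt_orthantProb_comp {a r : ℝ → ℝ} {a' r' s : ℝ} (ha : HasDerivAt a a' s)
    (hr : HasDerivAt r r' s) (hs : |r s| < 1) (b : ℝ) :
    HasDerivAt (fun u => orthantProb (a u) b (r u))
      (a' * -(φ (a s) * Qtail ((b - r s * a s) / Real.sqrt (1 - r s ^ 2))) +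
        r' * biGauss (a s) b (r s)) s := by
  have hcomp := HasFDerivAt.comp_hasDerivAt (f := fun u => (a u, r u)) s
    (hasStrictFDerivAt_orthantProb hs (a s) b).hasFDerivAt (ha.prodMk hr)
  exact hcomp.congr_deriv (by simp)

end OrthantProbability

lemma gFun_eq (κ₁ κ₂ ρ : ℝ) :
    gFun κ₁ κ₂ ρ = κ₁ * φ κ₁ * Qtail ((κ₂ - ρ * κ₁) / Real.sqrt (1 - ρ ^ 2)) -
      ρ * biGauss κ₁ κ₂ ρ := by
  rw [gFun, gaussianPDFReal_zero_one]
  ring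

theorem orthantProb_hasDerivAt_sigma1_general (v b c s : ℝ) (hc : |c| < |s|) :
    HasDerivAt (fun u => orthantProb (v / u) b (c / u)) ((1 / s) * gFun (v / s) b (c / s)) s := by
  have hs₀ : 0 < |s| := (abs_nonneg c).trans_lt hc
  have hs : s ≠ 0 := abs_pos.1 hs₀
  have hdiv : ∀ w : ℝ, HasDerivAt (fun u => w / u) (-w / s ^ 2) s := fun w => by
    simpa using (hasDerivAt_const s w).fun_div (hasDerivAt_id s) hs
  have hcorr : |c / s| < 1 := by rwa [abs_div, div_lt_one hs₀]
  refine (hasDerivAt_orthantProb_comp (hdiv v) (hdiv c) hcorr b).congr_deriv ?_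
  rw [gFun_eq]
  ring

/-- Let `v ∈ ℝ`, `σ₁ > 0`, `σ₂ > 0` and `σ₁₂ ∈ ℝ` with
`|σ₁₂| < σ₁·σ₂`, and set `ρ = σ₁₂/(σ₁·σ₂)`. The function
`s ↦ p₁₂(v/s, v/σ₂, σ₁₂/(s·σ₂))` is differentiable at `s = σ₁` and its derivative
there equals `(1/σ₁)·g(v/σ₁, v/σ₂, ρ)`. -/
theorem orthantProb_hasDerivAt_sigma1 (v σ₁ σ₂ σ₁₂ : ℝ) (hσ₁ : 0 < σ₁) (hσ₂ : 0 < σ₂)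
    (hσ₁₂ : |σ₁₂| < σ₁ * σ₂) :
    HasDerivAt (fun s => orthantProb (v / s) (v / σ₂) (σ₁₂ / (s * σ₂)))
      ((1 / σ₁) * gFun (v / σ₁) (v / σ₂) (σ₁₂ / (σ₁ * σ₂))) σ₁ := by
  have hc : |σ₁₂ / σ₂| < |σ₁| := by
    rwa [abs_div, abs_of_pos hσ₁, abs_of_pos hσ₂, div_lt_iff₀ hσ₂]
  simpa only [div_div, mul_comm σ₂] using
    orthantProb_hasDerivAt_sigma1_general v (v / σ₂) (σ₁₂ / σ₂) σ₁ hc
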